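/- arXiv:1905.02387 — 3 statements merged into one kernel-verified Lean document; each statement's English description precedes it below -/
import Mathlib

section
/- Let π ∈ K_n with n ≥ 4. The following three conditions are equivalent: (1) n = 4k for some k ≥ 1 and there exist a permutation π′ of length k and permutations π^1,…,π^k each equal to [2413] or [3142] such that π = π′[π^1,…,π^k]; concretely, for each m ∈ {1,…,k}, the entries of π in positions 4(m−1)+1,…,4m form exactly the value set {4(π′(m)−1)+1,…,4π′(m)} and, read left to right, are order-isomorphic to [2413] or to [3142]; (2) for every value a ∈ {1,…,n}, the permutation ∇*_a(π) contains a 3-block, i.e., three consecutive positions whose values are three consecutive integers; (3) π has no prince. -/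
open Equiv

/-- The Manhattan distance between two elements of `Fin n`. -/
def fdist {n : ℕ} (a b : Fin n) : ℕ := ((a : ℤ) - (b : ℤ)).natAbs

/-- A king permutation: no two adjacent positions carry adjacent values. -/
def IsKing {n : ℕ} (σ : Equiv.Perm (Fin n)) : Prop :=
  ∀ i j : Fin n, (j : ℕ) = (i : ℕ) + 1 → fdist (σ i) (σ j) ≠ 1

/-- Pattern containment `π ⪯ σ`. -/
def Contains {m n : ℕ} (π : Equiv.Perm (Fin m)) (σ : Equiv.Perm (Fin n)) : Prop :=
  ∃ f : Fin m ↪o Fin n, ∀ a b : Fin m, π a < π b ↔ σ (f a) < σ (f b)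

/-- Strict pattern containment `π ≺ σ`. -/
def StrictContains {m n : ℕ} (π : Equiv.Perm (Fin m)) (σ : Equiv.Perm (Fin n)) : Prop :=
  Contains π σ ∧ m < n

/-- `nabla σ i` deletes the `i`-th entry of `σ` and standardizes. -/
def nabla {n : ℕ} (σ : Equiv.Perm (Fin (n + 1))) (i : Fin (n + 1)) : Equiv.Perm (Fin n) :=
  Equiv.removeNone ((finSuccEquiv' i).symm.trans (σ.trans (finSuccEquiv' (σ i))))

/-- `nablaStar σ a` deletes the value `a` from `σ` and standardizes. -/
def nablaStar {n : ℕ} (σ : Equiv.Perm (Fin (n + 1))) (a : Fin (n + 1)) : Equiv.Perm (Fin n) :=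
  nabla σ (σ⁻¹ a)

/-- The permutation [2413] (0-based one-line notation [1,3,0,2]). -/
def p2413 : Equiv.Perm (Fin 4) :=
  ⟨![1, 3, 0, 2], ![2, 0, 3, 1], by intro x; fin_cases x <;> rfl, by intro x; fin_cases x <;> rfl⟩

/-- The permutation [3142] (0-based one-line notation [2,0,3,1]). -/
def p3142 : Equiv.Perm (Fin 4) :=
  ⟨![2, 0, 3, 1], ![1, 3, 0, 2], by intro x; fin_cases x <;> rfl, by intro x; fin_cases x <;> rfl⟩

/-- `σ i` vertically separates `σ j` from `σ k`. -/
def VSep {n : ℕ} (σ : Equiv.Perm (Fin n)) (i j k : Fin n) : Prop :=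
  i ≠ j ∧ i ≠ k ∧ j ≠ k ∧ fdist i j = 1 ∧ fdist i k = 1 ∧ fdist (σ j) (σ k) = 1

/-- `σ i` horizontally separates `σ j` from `σ k`. -/
def HSep {n : ℕ} (σ : Equiv.Perm (Fin n)) (i j k : Fin n) : Prop :=
  i ≠ j ∧ i ≠ k ∧ j ≠ k ∧ fdist (σ i) (σ j) = 1 ∧ fdist (σ i) (σ k) = 1 ∧ fdist j k = 1

/-- `σ i` separates `σ j` from `σ k`. -/
def Separates {n : ℕ} (σ : Equiv.Perm (Fin n)) (i j k : Fin n) : Prop :=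
  VSep σ i j k ∨ HSep σ i j k

/-- `π` has a 2-block at positions `j`, `j+1` (0-based). -/
def HasTwoBlockAt {n : ℕ} (π : Equiv.Perm (Fin n)) (j : ℕ) : Prop :=
  ∃ hj : j + 1 < n, fdist (π ⟨j, by omega⟩) (π ⟨j + 1, hj⟩) = 1

/-- `π` has a 3-block at positions `p`, `p+1`, `p+2` (0-based). -/
def HasThreeBlockAt {n : ℕ} (π : Equiv.Perm (Fin n)) (p : ℕ) : Prop :=
  ∃ hp : p + 2 < n, ∃ m : ℕ,
    ({(π ⟨p, by omega⟩ : ℕ), (π ⟨p + 1, by omega⟩ : ℕ), (π ⟨p + 2, by omega⟩ : ℕ)} : Finset ℕ)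
      = {m, m + 1, m + 2}

/-!
Deleting an entry of a king permutation leaves a king permutation unless that entry *separates* two
others: either its two neighbouring positions carry adjacent values, or its two neighbouring values
sit in adjacent positions. A prince is a one-entry deletion that is king, so having no prince means
that every entry separates two others.

Suppose this holds, and read the permutation from left to right. If the first `b = 4m` entries
already form `m` blocks of type [2413] or [3142], then every value adjacent to the last of them is
used up, so the entry `v` at position `b` separates horizontally: `v ∓ 1` and `v ± 1` stand at
positions `p` and `p + 1` with `b < p`. These two entries have to separate as well, and the only
way for them to do so without a collision of values is that `p = b + 2` and that position `b + 1`
carries `v ± 2`, which completes one more block. The blocks then occupy disjoint intervals of four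
values which together exhaust `{0, …, 4k - 1}`, so their minima are the multiples of four.
-/

section Sequence

/-- `x` and `y` are the two integers next to `v`, in either order. -/
def Straddles (x y v : ℤ) : Prop :=
  (x = v - 1 ∧ y = v + 1) ∨ (x = v + 1 ∧ y = v - 1)

/-- Entry `i` of the sequence `s 0, …, s (N - 1)` separates two others, vertically or horizontally:
the counterpart of `Separates` for integer sequences. -/
def IsSeparatorIn (N : ℕ) (s : ℕ → ℤ) (i : ℕ) : Prop :=
  (∃ j, i = j + 1 ∧ j + 2 < N ∧ (s (j + 2) - s j).natAbs = 1) ∨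
    ∃ p, p + 1 < N ∧ Straddles (s p) (s (p + 1)) (s i)

/-- The entries `s 0, …, s (N - 1)` are distinct, adjacent ones never differ by one, and each of
them separates two others. For the entries of a king permutation this says that every deletion
destroys the king property. -/
structure IsAllSeparating (N : ℕ) (s : ℕ → ℤ) : Prop where
  inj : ∀ ⦃i⦄, i < N → ∀ ⦃j⦄, j < N → s i = s j → i = j
  king : ∀ ⦃i⦄, i + 1 < N → (s (i + 1) - s i).natAbs ≠ 1
  separator : ∀ ⦃i⦄, i < N → IsSeparatorIn N s i

/-- The values adjacent to the entry just before position `b` do not occur at `b` or later. -/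
def IsFence (N : ℕ) (s : ℕ → ℤ) (b : ℕ) : Prop :=
  ∀ a x, b = a + 1 → b ≤ x → x < N → (s x - s a).natAbs ≠ 1

/-- Positions `b, …, b + 3` of `s` carry the values `c, …, c + 3` in the pattern [2413] or
[3142]. -/
def IsFourBlock (s : ℕ → ℤ) (b : ℕ) (c : ℤ) : Prop :=
  ∃ τ : Perm (Fin 4), (τ = p2413 ∨ τ = p3142) ∧ ∀ r : Fin 4, s (b + r) = c + (τ r : ℕ)

/-- The first `4 * m` entries of `s` split into `m` consecutive four-blocks. -/
def IsTiled (s : ℕ → ℤ) (m : ℕ) : Prop :=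
  ∀ j < m, ∃ c, IsFourBlock s (4 * j) c

variable {N b p m : ℕ} {s : ℕ → ℤ} {c v : ℤ}

theorem isFourBlock_iff :
    IsFourBlock s b c ↔
      (s b = c + 1 ∧ s (b + 1) = c + 3 ∧ s (b + 2) = c ∧ s (b + 3) = c + 2) ∨
        (s b = c + 2 ∧ s (b + 1) = c ∧ s (b + 2) = c + 3 ∧ s (b + 3) = c + 1) := by
  simp [IsFourBlock, or_and_right, exists_or, Fin.forall_fin_succ, p2413, p3142]

theorem IsFourBlock.exists_eq (h : IsFourBlock s b c) (hv : v ∈ Set.Icc c (c + 3)) :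
    ∃ r < 4, s (b + r) = v := by
  obtain ⟨τ, -, hτ⟩ := h
  obtain ⟨hcv, hvc⟩ := hv
  refine ⟨τ.symm ⟨(v - c).toNat, by omega⟩, Fin.isLt _, ?_⟩
  rw [hτ, Equiv.apply_symm_apply]
  grind

theorem IsFourBlock.apply_mem_Icc (h : IsFourBlock s b c) {i : ℕ} (hbi : b ≤ i) (hib : i ≤ b + 3) :
    s i ∈ Set.Icc c (c + 3) := by
  obtain ⟨τ, -, hτ⟩ := h
  have hi := hτ ⟨i - b, by omega⟩
  rw [Nat.add_sub_cancel' hbi] at hi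
  constructor <;> omega

theorem IsFourBlock.min_unique {c' : ℤ} (h : IsFourBlock s b c) (h' : IsFourBlock s b c') :
    c = c' := by
  rw [isFourBlock_iff] at h h'
  omega

theorem IsFourBlock.index_unique (inj : ∀ ⦃i⦄, i < N → ∀ ⦃j⦄, j < N → s i = s j → i = j)
    {m' : ℕ} {c' : ℤ} (h : IsFourBlock s (4 * m) c) (h' : IsFourBlock s (4 * m') c')
    (hm : 4 * m + 3 < N) (hm' : 4 * m' + 3 < N)
    (hv : v ∈ Set.Icc c (c + 3)) (hv' : v ∈ Set.Icc c' (c' + 3)) : m = m' := by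
  obtain ⟨r, hr, hrv⟩ := h.exists_eq hv
  obtain ⟨r', hr', hrv'⟩ := h'.exists_eq hv'
  have := inj (by omega) (by omega) (hrv.trans hrv'.symm)
  omega

theorem IsTiled.exists_eq_of_adjacent_last (h : IsTiled s m) {j : ℕ} (hj : j < m)
    (hv : (v - s (4 * j + 3)).natAbs = 1) : ∃ q < 4 * m, s q = v := by
  obtain ⟨c, hc⟩ := h j hj
  have hlast := isFourBlock_iff.1 hc
  obtain ⟨r, hr, hrv⟩ := hc.exists_eq (v := v) ⟨by omega, by omega⟩
  exact ⟨4 * j + r, by omega, hrv⟩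

theorem IsTiled.exists_eq_of_straddles (h : IsTiled s m) (hp : p + 1 < 4 * m)
    (hv : Straddles (s p) (s (p + 1)) v) : ∃ q < 4 * m, s q = v := by
  by_cases hlast : p % 4 = 3
  · have hp4 : 4 * (p / 4) + 3 = p := by omega
    refine h.exists_eq_of_adjacent_last (j := p / 4) (by omega) ?_
    rw [hp4]
    rcases hv with hv | hv <;> omega
  · obtain ⟨c, hc⟩ := h (p / 4) (by omega)
    obtain ⟨_, _⟩ := hc.apply_mem_Icc (i := p) (by omega) (by omega)
    obtain ⟨_, _⟩ := hc.apply_mem_Icc (i := p + 1) (by omega) (by omega)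
    have hv_mem : v ∈ Set.Icc c (c + 3) := by rcases hv with hv | hv <;> constructor <;> omega
    obtain ⟨r, hr, hrv⟩ := hc.exists_eq hv_mem
    exact ⟨4 * (p / 4) + r, by omega, hrv⟩

namespace IsAllSeparating

theorem isFence_of_isTiled (hs : IsAllSeparating N s) (ht : IsTiled s m) :
    IsFence N s (4 * m) := by
  intro a x ha hx hxN hadj
  obtain ⟨q, hq, hqx⟩ := ht.exists_eq_of_adjacent_last (j := m - 1) (v := s x) (by omega)
    (by rwa [show 4 * (m - 1) + 3 = a by omega])
  have := hs.inj (by omega) hxN hqx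
  omega

theorem exists_straddles_of_isTiled (hs : IsAllSeparating N s) (ht : IsTiled s m)
    (hm : 4 * m < N) :
    ∃ p, 4 * m < p ∧ p + 1 < N ∧ Straddles (s p) (s (p + 1)) (s (4 * m)) := by
  rcases hs.separator hm with ⟨j, hj, hjN, hadj⟩ | ⟨p, hp, hst⟩
  · exact absurd hadj (hs.isFence_of_isTiled ht j (j + 2) hj (by omega) hjN)
  · refine ⟨p, ?_, hp, hst⟩
    by_contra! hpm
    have hp_ne : p ≠ 4 * m := by rintro rfl; rcases hst with h | h <;> omega
    have hp_succ_ne : p + 1 ≠ 4 * m := by intro h; rw [h] at hst; rcases hst with h | h <;> omega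
    obtain ⟨q, hq, hqm⟩ := ht.exists_eq_of_straddles (by omega) hst
    exact hq.ne (hs.inj (by omega) hm hqm)

section Fence

variable (hs : IsAllSeparating N s) (hb : b < N) (hf : IsFence N s b)
include hs hb

include hf in
/-- If a later entry `i` next in value to entry `b` separates horizontally, then `s b` is one of the
two values around `s i`; as the entry before `b` is fenced off, the other one follows it. -/
theorem apply_succ_eq_of_straddles {i q : ℕ} (hbi : b ≤ i) (hi : i < N)
    (hadj : (s i - s b).natAbs = 1) (hq : q + 1 < N) (hst : Straddles (s q) (s (q + 1)) (s i)) :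
    s (b + 1) = 2 * s i - s b := by
  have hvalue : s q = s b ∨ s (q + 1) = s b := by rcases hst with h | h <;> omega
  rcases hvalue with hqb | hqb
  · obtain rfl := hs.inj (by omega) hb hqb
    rcases hst with h | h <;> omega
  · have hb_eq : b = q + 1 := (hs.inj hq hb hqb).symm
    refine absurd ?_ (hf q i hb_eq hbi hi)
    rcases hst with h | h <;> omega

theorem eq_add_two_of_apply_pred (hp : p + 2 < N) (hst : Straddles (s p) (s (p + 1)) (s b))
    (hright : s (p + 2) = 2 * s p - s b) (hleft : s (p - 1) = 2 * s (p + 1) - s b) : p = b + 2 := by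
  rcases hs.separator (i := p - 1) (by omega) with ⟨j, hj, -, hadj⟩ | ⟨q, hq, hq_st⟩
  · obtain rfl : p = j + 2 := by omega
    have : s j ≠ s (j + 2 + 2) := fun h => by have := hs.inj (by omega) hp h; omega
    have hjb : s j = s b := by rcases hst with h | h <;> omega
    rw [hs.inj (by omega) hb hjb]
  · exfalso
    have hvalue : s q = s (p + 1) ∨ s (q + 1) = s (p + 1) := by
      rcases hst with h | h <;> rcases hq_st with h' | h' <;> omega
    rcases hvalue with hqp | hqp
    · obtain rfl := hs.inj (by omega) (by omega) hqp
      rcases hst with h | h <;> rcases hq_st with h' | h' <;> grind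
    · obtain rfl : q = p := by have := hs.inj hq (by omega) hqp; omega
      rcases hst with h | h <;> rcases hq_st with h' | h' <;> omega

variable (hbp : b < p) (hp : p + 1 < N) (hst : Straddles (s p) (s (p + 1)) (s b))
include hbp hp hst

include hf in
theorem apply_add_two_eq_or :
    (p + 2 < N ∧ s (p + 2) = 2 * s p - s b) ∨ s (b + 1) = 2 * s (p + 1) - s b := by
  rcases hs.separator hp with ⟨j, hj, hjN, hadj⟩ | ⟨q, hq, hq_st⟩
  · obtain rfl : p = j := by omega
    have : s (p + 2) ≠ s b := fun h => by have := hs.inj hjN hb h; omega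
    exact .inl ⟨hjN, by rcases hst with h | h <;> omega⟩
  · refine .inr (hs.apply_succ_eq_of_straddles hb hf (by omega) hp ?_ hq hq_st)
    rcases hst with h | h <;> omega

include hf in
theorem apply_pred_eq_or :
    s (p - 1) = 2 * s (p + 1) - s b ∨ s (b + 1) = 2 * s p - s b := by
  rcases hs.separator (i := p) (by omega) with ⟨j, rfl, -, hadj⟩ | ⟨q, hq, hq_st⟩
  · have : s j ≠ s b := fun h => by
      have := hs.king (i := j) (by omega)
      rcases hst with h | h <;> omega
    left
    rw [Nat.add_sub_cancel]
    rcases hst with h | h <;> grind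
  · refine .inr (hs.apply_succ_eq_of_straddles hb hf hbp.le (by omega) ?_ hq hq_st)
    rcases hst with h | h <;> omega

include hf in
theorem eq_add_two_and_apply_succ_eq : p = b + 2 ∧ s (b + 1) = 2 * s (p + 1) - s b := by
  have eq_of_succ (hleft : s (p - 1) = 2 * s (p + 1) - s b)
      (hnext : s (b + 1) = 2 * s (p + 1) - s b) : p = b + 2 := by
    have := hs.inj (by omega) (by omega) (hleft.trans hnext.symm)
    omega
  rcases hs.apply_add_two_eq_or hb hf hbp hp hst with ⟨hp2, hright⟩ | hnext <;>
    rcases hs.apply_pred_eq_or hb hf hbp hp hst with hleft | hnext'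
  · obtain rfl := hs.eq_add_two_of_apply_pred hb hp2 hst hright hleft
    exact ⟨rfl, hleft⟩
  · have := hs.inj (by omega) hp2 (hnext'.trans hright.symm)
    omega
  · exact ⟨eq_of_succ hleft hnext, hnext⟩
  · rcases hst with h | h <;> omega

end Fence

theorem exists_isFourBlock_of_isTiled (hs : IsAllSeparating N s) (ht : IsTiled s m)
    (hm : 4 * m < N) : 4 * m + 3 < N ∧ ∃ c, IsFourBlock s (4 * m) c := by
  obtain ⟨p, hmp, hp, hst⟩ := hs.exists_straddles_of_isTiled ht hm
  obtain ⟨rfl, hnext⟩ :=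
    hs.eq_add_two_and_apply_succ_eq hm (hs.isFence_of_isTiled ht) hmp hp hst
  refine ⟨hp, ?_⟩
  rcases hst with ⟨hlow, hhigh⟩ | ⟨hhigh, hlow⟩
  · exact ⟨s (4 * m) - 1, isFourBlock_iff.2 (by grind)⟩
  · exact ⟨s (4 * m) - 2, isFourBlock_iff.2 (by grind)⟩

theorem isTiled (hs : IsAllSeparating N s) (hm : 4 * m ≤ N) : IsTiled s m := by
  induction m with
  | zero => intro j hj; omega
  | succ m ih =>
    have ht := ih (by omega)
    intro j hj
    rcases Nat.lt_succ_iff_lt_or_eq.1 hj with hj | rfl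
    · exact ht j hj
    · exact (hs.exists_isFourBlock_of_isTiled ht (by omega)).2

theorem four_dvd (hs : IsAllSeparating N s) : 4 ∣ N := by
  by_contra hN
  have := (hs.exists_isFourBlock_of_isTiled (hs.isTiled (m := N / 4) (by omega)) (by omega)).1
  omega

end IsAllSeparating

end Sequence

section Deletion

variable {n N : ℕ}

theorem nabla_succAbove (σ : Perm (Fin (n + 1))) (i : Fin (n + 1)) (j : Fin n) :
    (σ i).succAbove (nabla σ i j) = σ (i.succAbove j) := by
  obtain ⟨x, hx⟩ := Fin.exists_succAbove_eq (σ.injective.ne (Fin.succAbove_ne i j))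
  have himage : ((finSuccEquiv' i).symm.trans (σ.trans (finSuccEquiv' (σ i)))) (some j) =
      some x := by
    simp [← hx]
  have hnabla : some (nabla σ i j) = some x := (removeNone_some _ ⟨x, himage⟩).trans himage
  rw [Option.some.inj hnabla, hx]

theorem nabla_lt_nabla_iff (σ : Perm (Fin (n + 1))) (i : Fin (n + 1)) (a b : Fin n) :
    nabla σ i a < nabla σ i b ↔ σ (i.succAbove a) < σ (i.succAbove b) := by
  rw [← nabla_succAbove, ← nabla_succAbove, (Fin.strictMono_succAbove _).lt_iff_lt]

theorem contains_nabla (σ : Perm (Fin (n + 1))) (i : Fin (n + 1)) : Contains (nabla σ i) σ :=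
  ⟨Fin.succAboveOrderEmb i, nabla_lt_nabla_iff σ i⟩

theorem perm_eq_of_lt_iff_lt {σ τ : Perm (Fin n)} (h : ∀ a b, σ a < σ b ↔ τ a < τ b) : σ = τ := by
  have hmono : StrictMono (σ.symm.trans τ) := fun a b hab => (h _ _).1 (by simpa using hab)
  have hid : ⇑(σ.symm.trans τ) = id :=
    (hmono.range_inj strictMono_id).1 (by rw [Equiv.range_eq_univ, Set.range_id])
  ext x
  simpa using congrArg Fin.val (congrFun hid (σ x)).symm

theorem exists_eq_succAbove (f : Fin n ↪o Fin (n + 1)) : ∃ i, ⇑f = Fin.succAbove i := by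
  have hcard : (Set.range f)ᶜ.ncard = 1 := by
    rw [Set.ncard_compl, Set.ncard_range_of_injective f.injective]
    simp
  obtain ⟨i, hi⟩ := Set.ncard_eq_one.1 hcard
  refine ⟨i, (f.strictMono.range_inj (Fin.strictMono_succAbove i)).1 ?_⟩
  rw [Fin.range_succAbove, ← hi, compl_compl]

theorem Contains.exists_eq_nabla {σ : Perm (Fin (n + 1))} {τ : Perm (Fin n)} (h : Contains τ σ) :
    ∃ i, τ = nabla σ i := by
  obtain ⟨f, hf⟩ := h
  obtain ⟨i, hi⟩ := exists_eq_succAbove f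
  refine ⟨i, perm_eq_of_lt_iff_lt fun a b => ?_⟩
  rw [hf, hi, nabla_lt_nabla_iff]

theorem exists_prince_iff (π : Perm (Fin (n + 1))) :
    (∃ τ : Perm (Fin n), IsKing τ ∧ StrictContains τ π) ↔ ∃ i, IsKing (nabla π i) := by
  constructor
  · rintro ⟨τ, hτ, hcontains, -⟩
    obtain ⟨i, rfl⟩ := hcontains.exists_eq_nabla
    exact ⟨i, hτ⟩
  · rintro ⟨i, hi⟩
    exact ⟨nabla π i, hi, contains_nabla π i, n.lt_succ_self⟩

/-- The one-line notation of `π` as a sequence of integers, with junk value `0` from position `N`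
on. -/
def entry (π : Perm (Fin N)) (i : ℕ) : ℤ :=
  if h : i < N then (π ⟨i, h⟩ : ℕ) else 0

theorem entry_of_lt (π : Perm (Fin N)) {i : ℕ} (h : i < N) : entry π i = (π ⟨i, h⟩ : ℕ) :=
  dif_pos h

theorem entry_inj (π : Perm (Fin N)) ⦃i : ℕ⦄ (hi : i < N) ⦃j : ℕ⦄ (hj : j < N)
    (h : entry π i = entry π j) : i = j := by
  rw [entry_of_lt π hi, entry_of_lt π hj] at h
  simpa using π.injective (Fin.ext (Int.ofNat.inj h))

theorem entry_mem_Ico (π : Perm (Fin N)) {i : ℕ} (hi : i < N) : entry π i ∈ Set.Ico 0 (N : ℤ) := by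
  rw [entry_of_lt π hi]
  constructor <;> omega

theorem exists_entry_eq (π : Perm (Fin N)) {v : ℤ} (hv : v ∈ Set.Ico 0 (N : ℤ)) :
    ∃ i < N, entry π i = v := by
  lift v to ℕ using hv.1
  have hvN : v < N := by exact_mod_cast hv.2
  exact ⟨π.symm ⟨v, hvN⟩, Fin.isLt _, by simp [entry]⟩

theorem isKing_iff_entry (π : Perm (Fin N)) :
    IsKing π ↔ ∀ i, i + 1 < N → (entry π (i + 1) - entry π i).natAbs ≠ 1 := by
  constructor
  · intro h i hi
    rw [entry_of_lt π hi, entry_of_lt π (Nat.lt_of_succ_lt hi), ← Int.natAbs_neg, neg_sub]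
    exact h ⟨i, by omega⟩ ⟨i + 1, hi⟩ rfl
  · rintro h ⟨i, hi⟩ ⟨_, hj⟩ rfl
    have := h i hj
    rwa [entry_of_lt π hj, entry_of_lt π hi, ← Int.natAbs_neg, neg_sub] at this

theorem entry_nabla (σ : Perm (Fin (n + 1))) (i : Fin (n + 1)) {j : ℕ} (hj : j < n) :
    entry σ (if j < i then j else j + 1) =
      if entry (nabla σ i) j < entry σ i then entry (nabla σ i) j else entry (nabla σ i) j + 1 := by
  have val_succAbove {k : ℕ} (a : Fin (k + 1)) (x : Fin k) :
      (a.succAbove x : ℕ) = if (x : ℕ) < a then (x : ℕ) else x + 1 := by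
    simp only [Fin.succAbove, Fin.lt_def, Fin.val_castSucc]
    split_ifs <;> simp
  have h := congrArg Fin.val (nabla_succAbove σ i ⟨j, hj⟩)
  rw [val_succAbove] at h
  rw [show (if j < (i : ℕ) then j else j + 1) = i.succAbove ⟨j, hj⟩ by rw [val_succAbove],
    entry_of_lt _ (Fin.isLt _), entry_of_lt _ hj, entry_of_lt _ i.isLt]
  exact_mod_cast h.symm

theorem HasThreeBlockAt.not_isKing {π : Perm (Fin N)} {p : ℕ} (h : HasThreeBlockAt π p) :
    ¬ IsKing π := by
  intro hking
  rw [isKing_iff_entry] at hking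
  obtain ⟨hp, m, hm⟩ := h
  have hleft := hking p (by omega)
  have hright := hking (p + 1) hp
  rw [entry_of_lt π (by omega), entry_of_lt π (by omega)] at hleft hright
  simp only [Finset.ext_iff, Finset.mem_insert, Finset.mem_singleton] at hm
  have := hm m
  have := hm (m + 1)
  have := hm (m + 2)
  grind

theorem hasThreeBlockAt_of_entry_mem_Icc {π : Perm (Fin N)} {p : ℕ} {c : ℤ} (hp : p + 2 < N)
    (h : ∀ j, p ≤ j → j ≤ p + 2 → entry π j ∈ Set.Icc c (c + 2)) : HasThreeBlockAt π p := by
  have h0 := h p (by omega) (by omega)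
  have h1 := h (p + 1) (by omega) (by omega)
  have h2 := h (p + 2) (by omega) (by omega)
  have entry_ne {i j : ℕ} (hi : i < N) (hj : j < N) (hij : i ≠ j) : entry π i ≠ entry π j :=
    hij ∘ entry_inj π hi hj
  have h01 := entry_ne (i := p) (j := p + 1) (by omega) (by omega) (by omega)
  have h12 := entry_ne (i := p + 1) (j := p + 2) (by omega) hp (by omega)
  have h02 := entry_ne (i := p) (j := p + 2) (by omega) hp (by omega)
  rw [entry_of_lt π (by omega)] at h0 h1 h2
  simp only [entry_of_lt π (show p < N by omega), entry_of_lt π (show p + 1 < N by omega),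
    entry_of_lt π hp] at h01 h12 h02
  simp only [Set.mem_Icc] at h0 h1 h2
  refine ⟨hp, c.toNat, ?_⟩
  ext w
  simp only [Finset.mem_insert, Finset.mem_singleton]
  omega

/-- Deleting one of the four entries closes the gap both in positions and in values, so the other
three fill an interval of three values. -/
theorem hasThreeBlockAt_nabla_of_isFourBlock {π : Perm (Fin (n + 1))} {b : ℕ} {c : ℤ}
    (h : IsFourBlock (entry π) b c) (hb : b + 3 < n + 1) {i : Fin (n + 1)} (hbi : b ≤ i)
    (hib : i ≤ b + 3) : HasThreeBlockAt (nabla π i) b := by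
  refine hasThreeBlockAt_of_entry_mem_Icc (c := c) (by omega) fun j hbj hjb => ?_
  have hj : j < n := by omega
  set j' := if j < i then j else j + 1 with hj'
  obtain ⟨hi_low, hi_high⟩ := h.apply_mem_Icc hbi hib
  obtain ⟨hj_low, hj_high⟩ := h.apply_mem_Icc (i := j') (by grind) (by grind)
  have : entry π j' ≠ entry π i := fun e => by
    have := entry_inj π (by grind) i.isLt e
    grind
  have hdel := entry_nabla π i hj
  rw [← hj'] at hdel
  constructor <;> split_ifs at hdel <;> omega

theorem isSeparatorIn_of_not_isKing_nabla {π : Perm (Fin (n + 1))} (hπ : IsKing π)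
    {i : Fin (n + 1)} (h : ¬ IsKing (nabla π i)) : IsSeparatorIn (n + 1) (entry π) i := by
  rw [isKing_iff_entry] at hπ h
  push Not at h
  obtain ⟨j, hj, hadj⟩ := h
  have hleft := entry_nabla π i (j := j) (by omega)
  have hright := entry_nabla π i hj
  rcases lt_trichotomy (j + 1) i with hji | hji | hji
  · right
    rw [if_pos (by omega)] at hleft hright
    have := hπ j (by omega)
    refine ⟨j, by omega, ?_⟩
    unfold Straddles
    split_ifs at hleft hright <;> omega
  · left
    rw [if_pos (by omega)] at hleft
    rw [if_neg (by omega)] at hright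
    refine ⟨j, hji.symm, by omega, ?_⟩
    have := hπ j (by omega)
    have := hπ (j + 1) (by omega)
    rw [← hji] at hleft hright
    split_ifs at hleft hright <;> grind
  · right
    rw [if_neg (by omega)] at hleft hright
    have := hπ (j + 1) (by omega)
    refine ⟨j + 1, by omega, ?_⟩
    unfold Straddles
    split_ifs at hleft hright <;> omega

theorem isAllSeparating_entry {π : Perm (Fin (n + 1))} (hπ : IsKing π)
    (h : ∀ i, ¬ IsKing (nabla π i)) : IsAllSeparating (n + 1) (entry π) where
  inj := entry_inj π
  king := (isKing_iff_entry π).1 hπ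
  separator i hi := isSeparatorIn_of_not_isKing_nabla hπ (h ⟨i, hi⟩)

end Deletion

section Inflation

variable {n N : ℕ}

/-- `π` is an inflation of some permutation `π'` by four-blocks: block `m` occupies the positions
from `4 * m` on and the values from `4 * π' m` on. -/
def IsFourBlockInflation (π : Perm (Fin N)) : Prop :=
  ∃ k, N = 4 * k ∧ ∃ π' : Perm (Fin k), ∀ m : Fin k, IsFourBlock (entry π) (4 * m) (4 * (π' m : ℕ))

theorem isFourBlockInflation_iff (π : Perm (Fin N)) :
    IsFourBlockInflation π ↔
      ∃ (k : ℕ) (hk : N = 4 * k) (π' : Perm (Fin k)),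
        ∀ m : Fin k, ∃ τ : Perm (Fin 4), (τ = p2413 ∨ τ = p3142) ∧
          ∀ r : Fin 4, (π ⟨4 * (m : ℕ) + (r : ℕ), by omega⟩ : ℕ) = 4 * (π' m : ℕ) + (τ r : ℕ) := by
  simp only [IsFourBlockInflation, IsFourBlock]
  constructor
  · rintro ⟨k, rfl, π', h⟩
    refine ⟨k, rfl, π', fun m => ?_⟩
    obtain ⟨τ, hτ, hr⟩ := h m
    refine ⟨τ, hτ, fun r => ?_⟩
    have := hr r
    rw [entry_of_lt π (by omega)] at this
    exact_mod_cast this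
  · rintro ⟨k, rfl, π', h⟩
    refine ⟨k, rfl, π', fun m => ?_⟩
    obtain ⟨τ, hτ, hr⟩ := h m
    refine ⟨τ, hτ, fun r => ?_⟩
    rw [entry_of_lt π (by omega), hr r]
    push_cast
    rfl

theorem IsFourBlockInflation.exists_hasThreeBlockAt_nabla {π : Perm (Fin (n + 1))}
    (h : IsFourBlockInflation π) (i : Fin (n + 1)) : ∃ p, HasThreeBlockAt (nabla π i) p := by
  obtain ⟨k, hk, π', hblock⟩ := h
  exact ⟨_, hasThreeBlockAt_nabla_of_isFourBlock (hblock ⟨i / 4, by omega⟩)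
    (by dsimp only; omega) (by dsimp only; omega) (by dsimp only; omega)⟩

theorem IsFourBlock.min_mem_Ico {π : Perm (Fin N)} {b : ℕ} {c : ℤ}
    (h : IsFourBlock (entry π) b c) (hb : b + 3 < N) : c ∈ Set.Ico 0 (N : ℤ) := by
  obtain ⟨r, hr, hrc⟩ := h.exists_eq (v := c) ⟨le_rfl, by omega⟩
  rw [← hrc]
  exact entry_mem_Ico π (by omega)

/-- The block holding the value `c - 1` ends there, since it is disjoint from the block with minimum
`c`; its minimum is thus `c - 4`, and induction applies. -/
theorem IsTiled.four_dvd_min {k m : ℕ} {π : Perm (Fin (4 * k))} (ht : IsTiled (entry π) k)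
    (hm : m < k) {c : ℤ} (hc : IsFourBlock (entry π) (4 * m) c) : 4 ∣ c := by
  have hc_mem := hc.min_mem_Ico (by omega)
  lift c to ℕ using hc_mem.1
  induction c using Nat.strong_induction_on generalizing m with
  | _ c ih =>
  by_contra hndvd
  have hcN := hc_mem.2
  obtain ⟨i, hi, hic⟩ := exists_entry_eq π (v := c - 1) ⟨by omega, by omega⟩
  obtain ⟨c', hc'⟩ := ht (i / 4) (by omega)
  have hc'_mem := hc'.min_mem_Ico (by omega)
  lift c' to ℕ using hc'_mem.1
  obtain ⟨hlow, hhigh⟩ := hc'.apply_mem_Icc (i := i) (by omega) (by omega)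
  have hdvd : (4 : ℤ) ∣ c' := ih c' (by omega) (by omega) hc' hc'_mem
  have hmi : m = i / 4 :=
    hc.index_unique (entry_inj π) hc' (by omega) (by omega) (v := c) ⟨le_rfl, by omega⟩
      ⟨by omega, by omega⟩
  subst hmi
  have := hc.min_unique hc'
  omega

theorem IsTiled.isFourBlockInflation {k : ℕ} {π : Perm (Fin (4 * k))} (ht : IsTiled (entry π) k) :
    IsFourBlockInflation π := by
  have hblock (m : Fin k) : ∃ j : Fin k, IsFourBlock (entry π) (4 * m) (4 * (j : ℕ)) := by
    obtain ⟨c, hc⟩ := ht m m.isLt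
    obtain ⟨j, rfl⟩ := ht.four_dvd_min m.isLt hc
    obtain ⟨hj, hjk⟩ := hc.min_mem_Ico (by omega)
    lift j to ℕ using by omega
    exact ⟨⟨j, by omega⟩, hc⟩
  choose f hf using hblock
  have hinj : Function.Injective f := fun m m' hmm' => Fin.ext <|
    (hf m).index_unique (entry_inj π) (hf m') (by omega) (by omega)
      (v := 4 * (f m : ℕ)) ⟨le_rfl, by omega⟩ (by rw [hmm']; exact ⟨le_rfl, by omega⟩)
  exact ⟨k, rfl, Equiv.ofBijective f (Finite.injective_iff_bijective.1 hinj), hf⟩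

theorem IsAllSeparating.isFourBlockInflation {π : Perm (Fin N)}
    (hs : IsAllSeparating N (entry π)) : IsFourBlockInflation π := by
  obtain ⟨k, rfl⟩ := hs.four_dvd
  exact (hs.isTiled le_rfl).isFourBlockInflation

end Inflation

/-- for a king permutation `π` of length `n + 4 ≥ 4`, the following are
equivalent: (1) `π` is an inflation of some `π'` by blocks each equal to [2413] or [3142];
(2) deleting any value from `π` creates a 3-block; (3) `π` has no prince. -/
theorem no_prince_characterization (n : ℕ) (π : Equiv.Perm (Fin (n + 4))) (hπ : IsKing π) :
    ((∃ (k : ℕ) (hk : n + 4 = 4 * k) (π' : Equiv.Perm (Fin k)),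
        ∀ m : Fin k, ∃ τ : Equiv.Perm (Fin 4), (τ = p2413 ∨ τ = p3142) ∧
          ∀ r : Fin 4,
            (π ⟨4 * (m : ℕ) + (r : ℕ), by have := m.isLt; have := r.isLt; omega⟩ : ℕ)
              = 4 * (π' m : ℕ) + (τ r : ℕ)) ↔
      (∀ a : Fin (n + 4), ∃ p : ℕ, HasThreeBlockAt (nablaStar π a) p)) ∧
    ((∀ a : Fin (n + 4), ∃ p : ℕ, HasThreeBlockAt (nablaStar π a) p) ↔
      ¬ ∃ τ : Equiv.Perm (Fin (n + 3)), IsKing τ ∧ StrictContains τ π) := by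
  rw [← isFourBlockInflation_iff, exists_prince_iff, not_exists]
  have blocks_of_inflation (h : IsFourBlockInflation π) (a : Fin (n + 4)) :
      ∃ p, HasThreeBlockAt (nablaStar π a) p :=
    h.exists_hasThreeBlockAt_nabla (π⁻¹ a)
  have not_king_of_blocks (h : ∀ a, ∃ p, HasThreeBlockAt (nablaStar π a) p) (i : Fin (n + 4)) :
      ¬ IsKing (nabla π i) := by
    obtain ⟨p, hp⟩ := h (π i)
    simpa [nablaStar] using hp.not_isKing
  have inflation_of_not_king (h : ∀ i, ¬ IsKing (nabla π i)) : IsFourBlockInflation π :=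
    (isAllSeparating_entry hπ h).isFourBlockInflation
  exact ⟨⟨blocks_of_inflation, fun h => inflation_of_not_king (not_king_of_blocks h)⟩,
    not_king_of_blocks, fun h => blocks_of_inflation (inflation_of_not_king h)⟩
end

section
/- For every n > 4 and every σ ∈ K_n, there exists π ∈ K_5 such that π ⪯ σ. -/
open Equiv

/-! Plot a permutation as a set of points. It is a king exactly when any two of its points are cut,
that is, separated horizontally or vertically, by a third one.

A pattern avoiding `2413` and `3142` is a direct or a skew sum, so in such a pattern one descends
through intervals to two points that nothing cuts. Hence a king contains a king of length four.

Suppose that no king of length five is contained. Then every point can replace a unique point of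
each occurrence of a king of length four. The points that can replace a given one form an interval:
two points replacing different ones compare the way the replaced ones do, for otherwise some point
could not enter one of the modified occurrences. A fifth point and the point it replaces lie in one
such interval. It is again a king, so it contains another occurrence of a king of length four, but
it is proper, as it misses the other three points of the first occurrence. A point outside it would
have to replace a point of the second occurrence, so it would cut two of the remaining ones, which
is impossible for an interval. -/

open Finset Function OrderDual

section Cuts

variable {α β : Type*} [LinearOrder α] [LinearOrder β] {f : α → β} {S I : Finset α}
  {u v y : α}

/-- The point `(y, f y)` of the graph of `f` lies strictly between the points over `u` and `v`,
horizontally or vertically. For permutations this extends `Separates` to points that need not be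
neighbours. -/
def Cuts (f : α → β) (y u v : α) : Prop :=
  (u < y ∧ y < v ∨ v < y ∧ y < u) ∨ (f u < f y ∧ f y < f v ∨ f v < f y ∧ f y < f u)

instance : Decidable (Cuts f y u v) :=
  inferInstanceAs (Decidable (_ ∨ _))

/-- Any two points of `S` are cut by a third one: the restriction of `f` to `S` standardizes to a
king permutation. -/
def IsKingSet (f : α → β) (S : Finset α) : Prop :=
  ∀ u ∈ S, ∀ v ∈ S, u ≠ v → ∃ y ∈ S, Cuts f y u v

/-- `I` is an interval (a block) of the pattern of `f` on `S`: no point of `S` outside `I` cuts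
two points of `I`. -/
def IsInterval (f : α → β) (S I : Finset α) : Prop :=
  I ⊆ S ∧ ∀ y ∈ S, y ∉ I → ∀ u ∈ I, ∀ v ∈ I, ¬ Cuts f y u v

/-- There is no `k`-element king set. -/
def KingFree (f : α → β) (k : ℕ) : Prop :=
  ∀ T : Finset α, #T = k → ¬ IsKingSet f T

theorem Cuts.symm (h : Cuts f y u v) : Cuts f y v u := by
  unfold Cuts at *
  tauto

theorem Cuts.ne_left (h : Cuts f y u v) : y ≠ u := by
  rintro rfl
  simp [Cuts] at h

theorem Cuts.ne_right (h : Cuts f y u v) : y ≠ v :=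
  h.symm.ne_left

theorem IsKingSet.of_isInterval (hS : IsKingSet f S) (hI : IsInterval f S I) :
    IsKingSet f I := by
  intro u hu v hv huv
  obtain ⟨y, hyS, hy⟩ := hS u (hI.1 hu) v (hI.1 hv) huv
  exact ⟨y, by_contra fun hyI ↦ hI.2 y hyS hyI u hu v hv hy, hy⟩

end Cuts

section KingPermutations

variable {n : ℕ} {σ : Perm (Fin n)}

theorem fdist_eq_one_iff {a b : Fin n} : fdist a b = 1 ↔ a ⋖ b ∨ b ⋖ a := by
  simp only [fdist, Fin.covBy_iff, Nat.covBy_iff_add_one_eq]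
  omega

theorem forall_not_cuts_iff {i j : Fin n} (hij : i < j) :
    (∀ k, ¬ Cuts σ k i j) ↔ i ⋖ j ∧ fdist (σ i) (σ j) = 1 := by
  have hσ : σ i ≠ σ j := σ.injective.ne hij.ne
  have covBy_values (a b : Fin n) :
      σ a ⋖ σ b ↔ σ a < σ b ∧ ∀ k, σ a < σ k → ¬ σ k < σ b := by
    rw [CovBy, σ.surjective.forall]
  rw [fdist_eq_one_iff, covBy_values, covBy_values, CovBy]
  unfold Cuts
  grind

theorem isKingSet_univ_iff : IsKingSet σ univ ↔ IsKing σ := by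
  constructor
  · intro h i j hij hd
    have hlt : i < j := by omega
    obtain ⟨k, -, hk⟩ := h i (mem_univ i) j (mem_univ j) hlt.ne
    refine (forall_not_cuts_iff hlt).2 ⟨?_, hd⟩ k hk
    rw [Fin.covBy_iff, Nat.covBy_iff_add_one_eq, hij]
  · intro h
    have cut_of_lt {i j : Fin n} (hij : i < j) : ∃ k, Cuts σ k i j := by
      by_contra! hcut
      obtain ⟨hcov, hd⟩ := (forall_not_cuts_iff hij).1 hcut
      rw [Fin.covBy_iff, Nat.covBy_iff_add_one_eq] at hcov
      exact h i j hcov.symm hd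
    intro i _ j _ hij
    obtain hij | hji := hij.lt_or_gt
    · simpa using cut_of_lt hij
    · obtain ⟨k, hk⟩ := cut_of_lt hji
      exact ⟨k, mem_univ k, hk.symm⟩

theorem isKing_four_iff {τ : Perm (Fin 4)} : IsKing τ ↔ τ = p2413 ∨ τ = p3142 := by
  unfold IsKing fdist
  revert τ
  decide

theorem IsKing.exists_cuts_of_four {τ : Perm (Fin 4)} (hτ : IsKing τ) (i : Fin 4) :
    ∃ j k, Cuts τ i j k := by
  revert i
  obtain rfl | rfl := isKing_four_iff.1 hτ <;> decide

-- In `2413` and `3142` the adjacent pairs on the cycle `0, 1, 3, 2, 0` of positions are cut by one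
-- point each, and the pairs `0, 3` and `1, 2` by both points of the other.
theorem IsKing.exists_ne_cuts_of_four {τ : Perm (Fin 4)} (hτ : IsKing τ) (i j k l t : Fin 4)
    (hij : i ≠ j) (hki : k ≠ i) (hkj : k ≠ j) (hli : l ≠ i) (hlj : l ≠ j) (htj : t ≠ j) :
    (∃ m ≠ i, Cuts τ m j k) ∨ (∃ m ≠ j, Cuts τ m i l) ∨ (∃ m ≠ l, Cuts τ m j t) := by
  revert i j k l t
  obtain rfl | rfl := isKing_four_iff.1 hτ <;> decide

end KingPermutations

section Occurrences

variable {α β : Type*} [LinearOrder α] [LinearOrder β] {f : α → β} {m : ℕ} {τ : Perm (Fin m)}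
  {x x' : Fin m → α} {i j k : Fin m} {u v y : α}

/-- The points of the graph of `f` over `x 0, …, x (m - 1)` form an occurrence of the pattern `τ`.
The positions are a plain function rather than an order embedding, so that `Function.update` can
replace one of them. -/
structure IsOccurrence (f : α → β) (τ : Perm (Fin m)) (x : Fin m → α) : Prop where
  strictMono : StrictMono x
  value_lt_iff : ∀ i j, f (x i) < f (x j) ↔ τ i < τ j

namespace IsOccurrence

theorem cuts_iff (hx : IsOccurrence f τ x) :
    Cuts f (x k) (x i) (x j) ↔ Cuts τ k i j := by
  simp only [Cuts, hx.strictMono.lt_iff_lt, hx.value_lt_iff]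

theorem compare_update (h : IsOccurrence f τ (update x i y)) (hj : j ≠ i) :
    (x j < y ↔ j < i) ∧ (y < x j ↔ i < j) ∧
      (f (x j) < f y ↔ τ j < τ i) ∧ (f y < f (x j) ↔ τ i < τ j) := by
  simp only [← h.value_lt_iff, ← h.strictMono.lt_iff_lt, update_self, update_of_ne hj, and_self]

theorem update_of_compare (hx : IsOccurrence f τ x)
    (h : ∀ j ≠ i, (x j < y ↔ j < i) ∧ (y < x j ↔ i < j) ∧
      (f (x j) < f y ↔ τ j < τ i) ∧ (f y < f (x j) ↔ τ i < τ j)) :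
    IsOccurrence f τ (update x i y) := by
  refine ⟨fun j k hjk ↦ ?_, fun j k ↦ ?_⟩ <;>
  · by_cases hj : j = i <;> by_cases hk : k = i <;>
    simp_all [hx.strictMono.lt_iff_lt, hx.value_lt_iff]

theorem update_of_not_cuts (hf : Injective f) (hx : IsOccurrence f τ x)
    (hy : ∀ j ≠ i, x j ≠ y ∧ ¬ Cuts f (x j) y (x i)) : IsOccurrence f τ (update x i y) := by
  refine hx.update_of_compare fun j hj ↦ ?_
  obtain ⟨hne, hcut⟩ := hy j hj
  have hne' : x j ≠ x i := hx.strictMono.injective.ne hj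
  have hfne : f (x j) ≠ f y := hf.ne hne
  have hfne' : f (x j) ≠ f (x i) := hf.ne hne'
  rw [← hx.strictMono.lt_iff_lt, ← hx.strictMono.lt_iff_lt, ← hx.value_lt_iff,
    ← hx.value_lt_iff]
  unfold Cuts at hcut
  grind

theorem exists_update (hf : Injective f) (hno : KingFree f (m + 1)) (hτ : IsKing τ)
    (hx : IsOccurrence f τ x) (y : α) : ∃ i, IsOccurrence f τ (update x i y) := by
  by_cases hy : y ∈ Set.range x
  · obtain ⟨i, rfl⟩ := hy
    exact ⟨i, by rwa [update_eq_self]⟩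
  have hyx (j : Fin m) : x j ≠ y := fun h ↦ hy ⟨j, h⟩
  by_contra! hupdate
  have exists_cut (i : Fin m) : ∃ j, Cuts f (x j) y (x i) := by
    by_contra! hcut
    exact hupdate i (hx.update_of_not_cuts hf fun j _ ↦ ⟨hyx j, hcut j⟩)
  refine hno (insert y (univ.image x)) ?_ ?_
  · rw [card_insert_of_notMem (by simpa using hy),
      card_image_of_injective _ hx.strictMono.injective, card_univ, Fintype.card_fin]
  simp only [IsKingSet, mem_insert, mem_image, mem_univ, true_and]
  rintro _ (rfl | ⟨i, rfl⟩) _ (rfl | ⟨j, rfl⟩) huv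
  · contradiction
  · obtain ⟨k, hk⟩ := exists_cut j
    exact ⟨x k, .inr ⟨k, rfl⟩, hk⟩
  · obtain ⟨k, hk⟩ := exists_cut i
    exact ⟨x k, .inr ⟨k, rfl⟩, hk.symm⟩
  · obtain ⟨k, -, hk⟩ :=
      isKingSet_univ_iff.2 hτ i (mem_univ i) j (mem_univ j) (ne_of_apply_ne x huv)
    exact ⟨x k, .inr ⟨k, rfl⟩, hx.cuts_iff.2 hk⟩

theorem not_cuts_of_update (hi : IsOccurrence f τ (update x i y))
    (hj : IsOccurrence f τ (update x' j y)) (hk : x k = x' k) : ¬ Cuts τ k i j := by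
  intro hcut
  have := hi.compare_update hcut.ne_left
  have := hj.compare_update hcut.ne_right
  unfold Cuts at hcut
  grind

theorem eq_of_update (hτ : IsKing τ) (hi : IsOccurrence f τ (update x i y))
    (hj : IsOccurrence f τ (update x j y)) : i = j := by
  by_contra hij
  obtain ⟨k, -, hk⟩ := isKingSet_univ_iff.2 hτ i (mem_univ i) j (mem_univ j) hij
  exact hi.not_cuts_of_update hj rfl hk

theorem not_cuts_of_update_update (hu : IsOccurrence f τ (update (update x i u) j y))
    (hv : IsOccurrence f τ (update (update x i v) j y)) (hij : i ≠ j) : ¬ Cuts f y u v := by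
  have := hu.compare_update hij
  have := hv.compare_update hij
  unfold Cuts
  grind

end IsOccurrence

theorem isOccurrence_iff_strictMono :
    IsOccurrence f τ x ↔ StrictMono x ∧ StrictMono (f ∘ x ∘ τ.symm) := by
  constructor
  · exact fun h ↦ ⟨h.strictMono, fun i j hij ↦ (h.value_lt_iff _ _).2 (by simpa using hij)⟩
  · exact fun h ↦ ⟨h.1, fun i j ↦ by simp [← h.2.lt_iff_lt]⟩

theorem isOccurrence_p3142_iff {x : Fin 4 → α} : IsOccurrence f p3142 x ↔
    (x 0 < x 1 ∧ x 1 < x 2 ∧ x 2 < x 3) ∧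
      (f (x 1) < f (x 3) ∧ f (x 3) < f (x 0) ∧ f (x 0) < f (x 2)) := by
  simp [isOccurrence_iff_strictMono, Fin.strictMono_iff_lt_succ, Fin.forall_fin_succ, p3142]

theorem isOccurrence_toDual_iff :
    IsOccurrence (toDual ∘ f) (τ.trans Fin.revPerm) x ↔ IsOccurrence f τ x := by
  constructor <;> exact fun h ↦ ⟨h.strictMono, fun i j ↦ by simpa using h.value_lt_iff j i⟩

theorem isOccurrence_toDual_p3142_iff {x : Fin 4 → α} :
    IsOccurrence (toDual ∘ f) p3142 x ↔ IsOccurrence f p2413 x := by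
  rw [← isOccurrence_toDual_iff (τ := p2413), show p2413.trans Fin.revPerm = p3142 by decide]

end Occurrences

section Separable

variable {α β : Type*} [LinearOrder α] [LinearOrder β] {f : α → β} {S A B C D : Finset α} {x : α}

/-- The pattern of `f` on `S` avoids `τ`. -/
def Avoids (f : α → β) (τ : Perm (Fin 4)) (S : Finset α) : Prop :=
  ∀ x : Fin 4 → α, (∀ i, x i ∈ S) → ¬ IsOccurrence f τ x

/-- The pattern of `f` on `A ∪ B` is the direct sum of its patterns on `A` and `B`. Applied to
`toDual ∘ f` this is the skew sum. -/
structure IsSum (f : α → β) (A B : Finset α) : Prop where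
  left_nonempty : A.Nonempty
  right_nonempty : B.Nonempty
  lt : ∀ a ∈ A, ∀ b ∈ B, a < b ∧ f a < f b

/-- The pattern of `f` on `S` is a direct or a skew sum of two nonempty patterns. -/
def Decomposable (f : α → β) (S : Finset α) : Prop :=
  ∃ A B, S = A ∪ B ∧ (IsSum f A B ∨ IsSum (toDual ∘ f) A B)

theorem Avoids.mono {τ : Perm (Fin 4)} (hS : Avoids f τ S) (hA : A ⊆ S) : Avoids f τ A :=
  fun x hx ↦ hS x fun i ↦ hA (hx i)

theorem avoids_toDual_p3142_iff : Avoids (toDual ∘ f) p3142 S ↔ Avoids f p2413 S := by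
  simp only [Avoids, isOccurrence_toDual_p3142_iff]

theorem decomposable_toDual_iff : Decomposable (toDual ∘ f) S ↔ Decomposable f S :=
  exists₂_congr fun _ _ ↦ and_congr_right' Or.comm

theorem IsSum.isInterval_left (h : IsSum f A B) : IsInterval f (A ∪ B) A := by
  refine ⟨subset_union_left, fun y hy hyA u hu v hv ↦ ?_⟩
  have hyB : y ∈ B := (mem_union.1 hy).resolve_left hyA
  have := h.lt u hu y hyB
  have := h.lt v hv y hyB
  unfold Cuts
  grind

theorem IsSum.isInterval_right (h : IsSum f A B) : IsInterval f (A ∪ B) B := by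
  refine ⟨subset_union_right, fun y hy hyB u hu v hv ↦ ?_⟩
  have hyA : y ∈ A := (mem_union.1 hy).resolve_right hyB
  have := h.lt y hyA u hu
  have := h.lt y hyA v hv
  unfold Cuts
  grind

theorem IsSum.disjoint (h : IsSum f A B) : Disjoint A B :=
  disjoint_left.2 fun a ha hb ↦ (h.lt a ha a hb).1.false

theorem IsSum.left_subset_of_insert_eq (h : IsSum f C D) (hx : ∀ a ∈ A, a < x)
    (hunion : insert x A = C ∪ D) : C ⊆ A := by
  obtain ⟨d, hd⟩ := h.right_nonempty
  have hdx : d ≤ x := by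
    obtain rfl | hdA := mem_insert.1 (hunion ▸ mem_union_right C hd)
    exacts [le_rfl, (hx d hdA).le]
  exact fun c hc ↦ mem_of_mem_insert_of_ne (hunion ▸ mem_union_left D hc)
    ((h.lt c hc d hd).1.trans_le hdx).ne

theorem IsSum.not_avoids_of_skew (hAB : IsSum f A B) (hx : ∀ y ∈ A ∪ B, y < x)
    (hCD : IsSum (toDual ∘ f) C D) (hunion : insert x A = C ∪ D) (hbelow : ∃ a ∈ A, f a < f x) :
    ¬ Avoids f p3142 (insert x (A ∪ B)) := by
  have lt_x : ∀ a ∈ A, a < x := fun a ha ↦ hx a (mem_union_left B ha)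
  have hCA : C ⊆ A := hCD.left_subset_of_insert_eq lt_x hunion
  have hskew : ∀ c ∈ C, ∀ d ∈ D, c < d ∧ f d < f c := hCD.lt
  obtain ⟨a, ha, hax⟩ := hbelow
  obtain ⟨b, hb⟩ := hAB.right_nonempty
  obtain ⟨c, hc⟩ := hCD.left_nonempty
  have hcA : c ∈ A := hCA hc
  have hxD : x ∈ D := (mem_union.1 (hunion ▸ mem_insert_self x A)).resolve_left
    fun hxC ↦ (lt_x x (hCA hxC)).false
  have haD : a ∈ D := (mem_union.1 (hunion ▸ mem_insert_of_mem ha)).resolve_left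
    fun haC ↦ hax.asymm (hskew a haC x hxD).2
  refine fun havoid ↦ havoid ![c, a, b, x] (by simp [Fin.forall_fin_succ, hcA, ha, hb]) ?_
  rw [isOccurrence_p3142_iff]
  exact ⟨⟨(hskew c hc a haD).1, (hAB.lt a ha b hb).1, hx b (mem_union_right A hb)⟩,
    hax, (hskew c hc x hxD).2, (hAB.lt c hcA b hb).2⟩

theorem IsSum.decomposable_insert (hf : Injective f) (hAB : IsSum f A B)
    (hx : ∀ y ∈ A ∪ B, y < x) (hA : Decomposable f (insert x A))
    (havoid : Avoids f p3142 (insert x (A ∪ B))) : Decomposable f (insert x (A ∪ B)) := by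
  have hlt : ∀ a ∈ A, ∀ b ∈ B, a < b ∧ f a < f b := hAB.lt
  by_cases above_A : ∀ a ∈ A, f a < f x
  · exact ⟨A, insert x B, by grind, .inl ⟨hAB.left_nonempty, insert_nonempty x B, by grind⟩⟩
  by_cases below_A : ∀ a ∈ A, f x < f a
  · have below_B : ∀ b ∈ B, f x < f b := by
      obtain ⟨a, ha⟩ := hAB.left_nonempty
      exact fun b hb ↦ (below_A a ha).trans (hlt a ha b hb).2
    refine ⟨A ∪ B, {x}, by grind, .inr ⟨hAB.left_nonempty.inl, singleton_nonempty x, ?_⟩⟩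
    simp only [comp_apply, toDual_lt_toDual]
    grind
  obtain ⟨C, D, hCD, h | h⟩ := hA
  · have hCA : C ⊆ A := h.left_subset_of_insert_eq (fun a ha ↦ hx a (mem_union_left B ha)) hCD
    refine ⟨C, D ∪ B, by rw [← insert_union, hCD, union_assoc],
      .inl ⟨h.left_nonempty, h.right_nonempty.inl, fun c hc y hy ↦ ?_⟩⟩
    exact (mem_union.1 hy).elim (h.lt c hc y) (hlt c (hCA hc) y)
  · refine (hAB.not_avoids_of_skew hx h hCD ?_ havoid).elim
    push Not at below_A
    obtain ⟨a, ha, hax⟩ := below_A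
    exact ⟨a, ha, hax.lt_of_ne (hf.ne (hx a (mem_union_left B ha)).ne)⟩

theorem decomposable_pair (hf : Injective f) {u v : α} (huv : u < v) :
    Decomposable f {u, v} := by
  obtain h | h := (hf.ne huv.ne).lt_or_gt
  · exact ⟨{u}, {v}, rfl, .inl ⟨by simp, by simp, by simp [huv, h]⟩⟩
  · exact ⟨{u}, {v}, rfl, .inr ⟨by simp, by simp, by simp [huv, h]⟩⟩

theorem IsSum.insert_ssubset (h : IsSum f A B) (hx : x ∉ A ∪ B) :
    insert x A ⊂ insert x (A ∪ B) := by
  obtain ⟨b, hb⟩ := h.right_nonempty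
  have hbA : b ∉ A := fun hbA ↦ (h.lt b hbA b hb).1.false
  refine ssubset_iff_of_subset (by grind) |>.2 ⟨b, by grind⟩

theorem decomposable_of_avoids (hf : Injective f) (hS : S.Nontrivial)
    (h2413 : Avoids f p2413 S) (h3142 : Avoids f p3142 S) : Decomposable f S := by
  induction S using Finset.strongInduction with
  | H S ih =>
  obtain ⟨x, hxS, hx⟩ := S.exists_max_image id hS.nonempty
  have lt_x : ∀ y ∈ S.erase x, y < x := fun y hy ↦
    (hx y (mem_of_mem_erase hy)).lt_of_ne (ne_of_mem_erase hy)
  have ih_of_ssubset {A : Finset α} (hA : A ⊂ S) (hA' : A.Nontrivial) : Decomposable f A :=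
    ih A hA hA' (h2413.mono hA.subset) (h3142.mono hA.subset)
  obtain ⟨y, hy⟩ | hS' := (hS.erase_nonempty (a := x)).exists_eq_singleton_or_nontrivial
  · rw [← insert_erase hxS, hy, pair_comm]
    exact decomposable_pair hf (lt_x y (by simp [hy]))
  obtain ⟨A, B, hAB, h⟩ := ih_of_ssubset (erase_ssubset hxS) hS'
  have hxAB : x ∉ A ∪ B := hAB ▸ notMem_erase x S
  obtain rfl : insert x (A ∪ B) = S := hAB ▸ insert_erase hxS
  rw [hAB] at lt_x
  have decomposable_insert_left (hA : A.Nonempty) (hss : insert x A ⊂ insert x (A ∪ B)) :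
      Decomposable f (insert x A) := by
    obtain ⟨a, ha⟩ := hA
    exact ih_of_ssubset hss ⟨x, mem_insert_self x A, a, mem_insert_of_mem ha,
      (lt_x a (mem_union_left B ha)).ne'⟩
  obtain h | h := h
  · exact h.decomposable_insert hf lt_x
      (decomposable_insert_left h.left_nonempty (h.insert_ssubset hxAB)) h3142
  · rw [← decomposable_toDual_iff]
    refine h.decomposable_insert (toDual.injective.comp hf) lt_x ?_
      (avoids_toDual_p3142_iff.2 h2413)
    rw [decomposable_toDual_iff]
    exact decomposable_insert_left h.left_nonempty (h.insert_ssubset hxAB)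

theorem isInterval_toDual_iff : IsInterval (toDual ∘ f) S A ↔ IsInterval f S A := by
  simp only [IsInterval, Cuts, comp_apply, toDual_lt_toDual]
  grind

theorem Decomposable.exists_isInterval (h : Decomposable f S) :
    ∃ A B, A.Nonempty ∧ B.Nonempty ∧ S = A ∪ B ∧ Disjoint A B ∧
      IsInterval f S A ∧ IsInterval f S B := by
  obtain ⟨A, B, rfl, h | h⟩ := h
  · exact ⟨A, B, h.left_nonempty, h.right_nonempty, rfl, h.disjoint,
      h.isInterval_left, h.isInterval_right⟩
  · exact ⟨A, B, h.left_nonempty, h.right_nonempty, rfl, h.disjoint,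
      isInterval_toDual_iff.1 h.isInterval_left, isInterval_toDual_iff.1 h.isInterval_right⟩

theorem IsKingSet.not_avoids (hf : Injective f) (hking : IsKingSet f S) (hS : S.Nontrivial)
    (h2413 : Avoids f p2413 S) : ¬ Avoids f p3142 S := by
  intro h3142
  induction S using Finset.strongInduction with
  | H S ih =>
  obtain ⟨A, B, hA, hB, hunion, hdisj, hAS, hBS⟩ :=
    (decomposable_of_avoids hf hS h2413 h3142).exists_isInterval
  have eq_singleton {I : Finset α} (hI : IsInterval f S I) (hne : I.Nonempty) (hIS : I ≠ S) :
      ∃ a, I = {a} :=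
    hne.exists_eq_singleton_or_nontrivial.resolve_right fun hnt ↦
      ih I (hI.1.ssubset_of_ne hIS) (hking.of_isInterval hI) hnt (h2413.mono hI.1)
        (h3142.mono hI.1)
  obtain ⟨a, rfl⟩ := eq_singleton hAS hA fun h ↦
    hB.ne_empty (hdisj.symm.eq_bot_of_le (union_eq_left.1 (h.trans hunion).symm))
  obtain ⟨b, rfl⟩ := eq_singleton hBS hB fun h ↦
    hA.ne_empty (hdisj.eq_bot_of_le (union_eq_right.1 (h.trans hunion).symm))
  rw [disjoint_singleton] at hdisj
  obtain ⟨y, hy, hcut⟩ := hking a (by simp [hunion]) b (by simp [hunion]) hdisj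
  obtain rfl | rfl : y = a ∨ y = b := by simpa [hunion] using hy
  · exact hcut.ne_left rfl
  · exact hcut.ne_right rfl

theorem IsKingSet.exists_isOccurrence (hf : Injective f) (hking : IsKingSet f S)
    (hS : S.Nontrivial) :
    ∃ τ : Perm (Fin 4), IsKing τ ∧ ∃ x : Fin 4 → α, (∀ i, x i ∈ S) ∧ IsOccurrence f τ x := by
  by_contra! h
  exact hking.not_avoids hf hS (h p2413 (isKing_four_iff.2 (.inl rfl)))
    (h p3142 (isKing_four_iff.2 (.inr rfl)))

end Separable

section Slots

variable {α β : Type*} [LinearOrder α] [LinearOrder β] {f : α → β} {τ : Perm (Fin 4)}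
  {x : Fin 4 → α} {i j : Fin 4} {u y : α}

theorem IsOccurrence.update_update (hf : Injective f) (hno : KingFree f 5) (hτ : IsKing τ)
    (hx : IsOccurrence f τ x) (hij : i ≠ j) (hu : IsOccurrence f τ (update x i u))
    (hy : IsOccurrence f τ (update x j y)) : IsOccurrence f τ (update (update x i u) j y) := by
  by_contra hc
  obtain ⟨k, hk⟩ := hu.exists_update hf hno hτ y
  obtain ⟨l, hl⟩ := hy.exists_update hf hno hτ u
  obtain ⟨t, ht⟩ := hl.exists_update hf hno hτ (x j)
  have hki : k ≠ i := by
    rintro rfl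
    rw [update_idem] at hk
    exact hij (hk.eq_of_update hτ hy)
  have hkj : k ≠ j := by
    rintro rfl
    exact hc hk
  have hlj : l ≠ j := by
    rintro rfl
    rw [update_idem] at hl
    exact hij (hu.eq_of_update hτ hl)
  have hli : l ≠ i := by
    rintro rfl
    rw [update_comm hij] at hc
    exact hc hl
  have htj : t ≠ j := by
    rintro rfl
    rw [update_comm hlj, update_idem, update_eq_self] at ht
    exact hli (ht.eq_of_update hτ hu)
  have hself : IsOccurrence f τ (update x j (x j)) := by rwa [update_eq_self]
  obtain ⟨m, hm, hcut⟩ | ⟨m, hm, hcut⟩ | ⟨m, hm, hcut⟩ :=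
    hτ.exists_ne_cuts_of_four i j k l t hij hki hkj hli hlj htj
  · exact hy.not_cuts_of_update hk (update_of_ne hm _ _).symm hcut
  · exact hu.not_cuts_of_update hl (update_of_ne hm _ _).symm hcut
  · refine hself.not_cuts_of_update ht ?_ hcut
    rw [update_of_ne hm, update_of_ne hcut.ne_left]

variable [Fintype α]

open Classical in
/-- The points that can replace the `i`-th point of the occurrence `x` of `τ`. -/
noncomputable def slot {m : ℕ} (f : α → β) (τ : Perm (Fin m)) (x : Fin m → α) (i : Fin m) :
    Finset α :=
  {y | IsOccurrence f τ (update x i y)}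

theorem mem_slot {m : ℕ} {τ : Perm (Fin m)} {x : Fin m → α} {i : Fin m} :
    y ∈ slot f τ x i ↔ IsOccurrence f τ (update x i y) := by
  simp [slot]

theorem isInterval_slot (hf : Injective f) (hno : KingFree f 5) (hτ : IsKing τ)
    (hx : IsOccurrence f τ x) (i : Fin 4) : IsInterval f univ (slot f τ x i) := by
  refine ⟨subset_univ _, fun y _ hy u hu v hv ↦ ?_⟩
  rw [mem_slot] at hy hu hv
  obtain ⟨j, hj⟩ := hx.exists_update hf hno hτ y
  have hij : i ≠ j := by
    rintro rfl
    exact hy hj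
  exact (hx.update_update hf hno hτ hij hu hj).not_cuts_of_update_update
    (hx.update_update hf hno hτ hij hv hj) hij

theorem IsInterval.eq_univ_of_isOccurrence {I : Finset α} (hf : Injective f)
    (hno : KingFree f 5) (hI : IsInterval f univ I) (hτ : IsKing τ) (hx : IsOccurrence f τ x)
    (hxI : ∀ i, x i ∈ I) : I = univ := by
  by_contra hne
  obtain ⟨y, hy⟩ : ∃ y, y ∉ I := by simpa [eq_univ_iff_forall] using hne
  obtain ⟨i, hi⟩ := hx.exists_update hf hno hτ y
  obtain ⟨j, k, hcut⟩ := hτ.exists_cuts_of_four i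
  have hcut' := hi.cuts_iff.2 hcut
  rw [update_self, update_of_ne hcut.ne_left.symm, update_of_ne hcut.ne_right.symm] at hcut'
  exact hI.2 y (mem_univ y) hy _ (hxI j) _ (hxI k) hcut'

theorem IsKingSet.exists_card_eq_five (hf : Injective f) (hcard : 4 < Fintype.card α)
    (hking : IsKingSet f univ) : ∃ T : Finset α, #T = 5 ∧ IsKingSet f T := by
  by_contra! hno
  have hnt : (univ : Finset α).Nontrivial :=
    one_lt_card_iff_nontrivial.1 (by rw [card_univ]; omega)
  obtain ⟨τ, hτ, x, -, hx⟩ := hking.exists_isOccurrence hf hnt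
  obtain ⟨y, hy⟩ : ∃ y, y ∉ Set.range x := by
    by_contra! hsurj
    have hle := Fintype.card_le_of_surjective x hsurj
    rw [Fintype.card_fin] at hle
    omega
  obtain ⟨i, hi⟩ := hx.exists_update hf hno hτ y
  have hself (j : Fin 4) : IsOccurrence f τ (update x j (x j)) := by rwa [update_eq_self]
  have hI : IsInterval f univ (slot f τ x i) := isInterval_slot hf hno hτ hx i
  have hI_nt : (slot f τ x i).Nontrivial :=
    ⟨y, mem_slot.2 hi, x i, mem_slot.2 (hself i), fun h ↦ hy ⟨i, h.symm⟩⟩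
  obtain ⟨τ', hτ', x', hx'I, hx'⟩ := (hking.of_isInterval hI).exists_isOccurrence hf hI_nt
  have hI_univ : slot f τ x i = univ := hI.eq_univ_of_isOccurrence hf hno hτ' hx' hx'I
  obtain ⟨j, hji⟩ := exists_ne i
  have hj : x j ∈ slot f τ x i := hI_univ ▸ mem_univ (x j)
  exact hji ((hself j).eq_of_update hτ (mem_slot.1 hj))

end Slots

section Standardization

variable {n k : ℕ} {σ : Perm (Fin n)} {T : Finset (Fin n)}

theorem IsKingSet.exists_isKing_contains (hT : IsKingSet σ T) (hcard : #T = k) :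
    ∃ π : Perm (Fin k), IsKing π ∧ Contains π σ := by
  let x : Fin k ↪o Fin n := T.orderEmbOfFin hcard
  let s : Perm (Fin k) := Tuple.sort (σ ∘ x)
  have hs : StrictMono (σ ∘ x ∘ s) := (Tuple.monotone_sort (σ ∘ x)).strictMono_of_injective
    (σ.injective.comp (x.injective.comp s.injective))
  have hocc : IsOccurrence σ s⁻¹ x :=
    isOccurrence_iff_strictMono.2 ⟨x.strictMono, hs⟩
  refine ⟨s⁻¹, isKingSet_univ_iff.1 fun i _ j _ hij ↦ ?_, x,
    fun i j ↦ (hocc.value_lt_iff i j).symm⟩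
  obtain ⟨y, hy, hcut⟩ := hT (x i) (T.orderEmbOfFin_mem hcard i) (x j)
    (T.orderEmbOfFin_mem hcard j) (x.injective.ne hij)
  obtain ⟨l, rfl⟩ : y ∈ Set.range x := by rwa [T.range_orderEmbOfFin hcard]
  exact ⟨l, mem_univ l, hocc.cuts_iff.1 hcut⟩

end Standardization

/-- every king of length `n > 4` contains a king of length `5`. -/
theorem contains_king_of_length_five (n : ℕ) (hn : 4 < n)
    (σ : Equiv.Perm (Fin n)) (hσ : IsKing σ) :
    ∃ π : Equiv.Perm (Fin 5), IsKing π ∧ Contains π σ := by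
  obtain ⟨T, hT, hking⟩ :=
    (isKingSet_univ_iff.2 hσ).exists_card_eq_five σ.injective (by rwa [Fintype.card_fin])
  exact hking.exists_isKing_contains hT
end

section
/- Let π ∈ K_n with n > 4. If π does not contain [2413], or π does not contain [3142], then μ(π) = 0. -/
open Equiv

open scoped Classical in
/-- The Möbius function of the poset of king permutations:
`μ([1]) = 1` and, for longer kings, `μ(σ) = -∑ μ(τ)` over all king permutations `τ ≺ σ`. -/
noncomputable def kingMu : (n : ℕ) → Equiv.Perm (Fin n) → ℤ
  | 0, _ => 1
  | 1, _ => 1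
  | n + 2, σ =>
    - ∑ l ∈ (Finset.Ico 1 (n + 2)).attach,
        ∑ τ ∈ Finset.univ.filter
            (fun τ : Equiv.Perm (Fin l.1) => IsKing τ ∧ StrictContains τ σ),
          kingMu l.1 τ
termination_by n _ => n
decreasing_by
  have := l.2
  simp only [Finset.mem_Ico] at this
  omega

/-!
A sequence of distinct values avoiding both 2413 and 3142 can be cut in two so that all values on
one side exceed all values on the other. Recursing into a part with at least two entries ends at two
adjacent entries with no value between them, so the only nonempty king permutation of this kind is
`[1]`: a longer king permutation contains `[2413]` or `[3142]`, and so has length at least 4.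

Hence if `π` avoids `q`, one of these two patterns, the king permutations strictly below `π` are
`[1]`, the other pattern `p`, and permutations of length greater than 4 which again avoid `q`. By
induction the latter contribute nothing, and `μ([1]) + μ(p) = 1 - 1 = 0`.
-/

open Function OrderDual Set

/-- `f` contains the pattern 2413. The pattern 3142 is obtained from 2413 by reversing the order of
the values, so `Has2413 (toDual ∘ f)` says that `f` contains the pattern 3142. -/
def Has2413 {α β : Type*} [LT α] [LT β] (f : α → β) : Prop :=
  ∃ i j k l, i < j ∧ j < k ∧ k < l ∧ f k < f i ∧ f i < f l ∧ f l < f j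

section Separable

variable {α β : Type*} [LinearOrder α] [LocallyFiniteOrder α] [LinearOrder β] {f : α → β} {a b : α}

theorem exists_covBy_forall_lt_of_not_has2413 (hf : Injective f) (h2413 : ¬ Has2413 f)
    (hab : a < b) (hfab : f a < f b) :
    ∃ p q, a ≤ p ∧ p ⋖ q ∧ q ≤ b ∧ ∀ i ∈ Icc a p, ∀ r ∈ Icc q b, f i < f r := by
  -- Cut after the last position whose value is at most `f a`.
  obtain ⟨p, hp, hlast⟩ := Finset.exists_max_image {x ∈ Finset.Icc a b | f x ≤ f a} id
    ⟨a, by simp [hab.le]⟩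
  simp only [Finset.mem_filter, Finset.mem_Icc, id, and_imp] at hp hlast
  obtain ⟨⟨hap, hpb⟩, hfp⟩ := hp
  have hpb : p < b := hpb.lt_of_ne fun e => (e ▸ hfp).not_gt hfab
  obtain ⟨q, hpq, hqb⟩ := hpb.exists_covby_le
  refine ⟨p, q, hap, hpq, hqb, fun i hi r hr => ?_⟩
  have hpr : p < r := hpq.lt.trans_le hr.1
  have har : f a < f r := by
    by_contra! hra
    exact (hlast r (hap.trans hpr.le) hr.2 hra).not_gt hpr
  by_contra! hri
  have hai : a < i := hi.1.lt_of_ne fun e => (e ▸ hri).not_gt har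
  have hip : i < p := hi.2.lt_of_ne fun e => (hri.trans (e ▸ hfp)).not_gt har
  exact h2413 ⟨a, i, p, r, hai, hip, hpr, hfp.lt_of_ne (hf.ne (hai.trans hip).ne'), har,
    hri.lt_of_ne (hf.ne (hip.trans hpr).ne')⟩

theorem exists_covBy_forall_lt_or_forall_gt (hf : Injective f) (h2413 : ¬ Has2413 f)
    (h3142 : ¬ Has2413 (toDual ∘ f)) (hab : a < b) :
    ∃ p q, a ≤ p ∧ p ⋖ q ∧ q ≤ b ∧ ((∀ i ∈ Icc a p, ∀ r ∈ Icc q b, f i < f r) ∨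
      ∀ i ∈ Icc a p, ∀ r ∈ Icc q b, f r < f i) := by
  rcases (hf.ne hab.ne).lt_or_gt with hlt | hgt
  · obtain ⟨p, q, hap, hpq, hqb, hlt⟩ := exists_covBy_forall_lt_of_not_has2413 hf h2413 hab hlt
    exact ⟨p, q, hap, hpq, hqb, .inl hlt⟩
  · obtain ⟨p, q, hap, hpq, hqb, hgt⟩ :=
      exists_covBy_forall_lt_of_not_has2413 (toDual.injective.comp hf) h3142 hab hgt
    exact ⟨p, q, hap, hpq, hqb, .inr hgt⟩

theorem exists_covBy_forall_notMem_uIoo (hf : Injective f) (h2413 : ¬ Has2413 f)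
    (h3142 : ¬ Has2413 (toDual ∘ f)) (hab : a < b) :
    ∃ i ∈ Icc a b, ∃ j ∈ Icc a b, i ⋖ j ∧ ∀ k ∈ Icc a b, f k ∉ uIoo (f i) (f j) := by
  induction hs : Finset.Icc a b using Finset.strongInduction generalizing a b with
  | H s ih =>
  subst hs
  obtain ⟨p, q, hap, hpq, hqb, hsep⟩ := exists_covBy_forall_lt_or_forall_gt hf h2413 h3142 hab
  have hmem {k} (hk : k ∈ Icc a b) : k ∈ Icc a p ∨ k ∈ Icc q b :=
    (le_or_gt k p).imp (⟨hk.1, ·⟩) (⟨hpq.ge_of_gt ·, hk.2⟩)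
  rcases hap.eq_or_lt with rfl | hap'
  · rcases hqb.eq_or_lt with rfl | hqb'
    · refine ⟨a, left_mem_Icc.2 hab.le, q, right_mem_Icc.2 hab.le, hpq, fun k hk => ?_⟩
      rcases hpq.wcovBy.eq_or_eq hk.1 hk.2 with rfl | rfl <;> simp
    · obtain ⟨i, hi, j, hj, hij, hbetween⟩ :=
        ih _ (Finset.Icc_ssubset_Icc_left hab.le hpq.lt le_rfl) hqb' rfl
      refine ⟨i, Icc_subset_Icc_left hpq.le hi, j, Icc_subset_Icc_left hpq.le hj, hij,
        fun k hk => (hmem hk).elim (fun hk => ?_) (hbetween k)⟩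
      rcases hsep with hlt | hgt
      · exact fun hki => (lt_inf_iff.2 ⟨hlt k hk i hi, hlt k hk j hj⟩).not_gt hki.1
      · exact fun hki => (sup_lt_iff.2 ⟨hgt k hk i hi, hgt k hk j hj⟩).not_gt hki.2
  · obtain ⟨i, hi, j, hj, hij, hbetween⟩ :=
      ih _ (Finset.Icc_ssubset_Icc_right hab.le le_rfl (hpq.lt.trans_le hqb)) hap' rfl
    have hpb : p ≤ b := hpq.le.trans hqb
    refine ⟨i, Icc_subset_Icc_right hpb hi, j, Icc_subset_Icc_right hpb hj, hij,
      fun k hk => (hmem hk).elim (hbetween k) fun hk => ?_⟩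
    rcases hsep with hlt | hgt
    · exact fun hki => (sup_lt_iff.2 ⟨hlt i hi k hk, hlt j hj k hk⟩).not_gt hki.2
    · exact fun hki => (lt_inf_iff.2 ⟨hgt i hi k hk, hgt j hj k hk⟩).not_gt hki.1

end Separable

section Containment

variable {l m n : ℕ} {π : Perm (Fin l)} {σ : Perm (Fin m)} {τ : Perm (Fin n)}

theorem Contains.trans (hπσ : Contains π σ) (hστ : Contains σ τ) : Contains π τ := by
  obtain ⟨f, hf⟩ := hπσ
  obtain ⟨g, hg⟩ := hστ
  exact ⟨f.trans g, fun a b => (hf a b).trans (hg _ _)⟩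

theorem Contains.length_le (h : Contains σ τ) : m ≤ n := by
  obtain ⟨f, -⟩ := h
  exact Fin.le_of_embedding f.toEmbedding

theorem contains_iff_exists_strictMono :
    Contains σ τ ↔ ∃ f : Fin m → Fin n, StrictMono f ∧ StrictMono (τ ∘ f ∘ σ.symm) := by
  constructor
  · rintro ⟨f, hf⟩
    exact ⟨f, f.strictMono, fun a b hab => (hf _ _).1 (by simpa using hab)⟩
  · rintro ⟨f, hf, hτ⟩
    exact ⟨.ofStrictMono f hf, fun a b => by simpa using (hτ.lt_iff_lt (a := σ a) (b := σ b)).symm⟩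

theorem Contains.eq {σ' : Perm (Fin m)} (h : Contains σ σ') : σ = σ' := by
  obtain ⟨f, hf, hσ⟩ := contains_iff_exists_strictMono.1 h
  obtain rfl := hf.eq_id
  ext a
  simpa using congr_arg Fin.val (congr_fun hσ.eq_id (σ a)).symm

theorem contains_of_length_one (hn : 0 < n) (ρ : Perm (Fin 1)) : Contains ρ τ :=
  contains_iff_exists_strictMono.2
    ⟨fun _ => ⟨0, hn⟩, Subsingleton.strictMono _, Subsingleton.strictMono _⟩

theorem contains_p2413_of_has2413 (h : Has2413 τ) : Contains p2413 τ := by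
  obtain ⟨i, j, k, l, hij, hjk, hkl, hki, hil, hlj⟩ := h
  refine contains_iff_exists_strictMono.2 ⟨![i, j, k, l], by simp [*], ?_⟩
  rw [Fin.strictMono_iff_lt_succ]
  intro x
  fin_cases x <;> assumption

theorem contains_p3142_of_has2413_toDual (h : Has2413 (toDual ∘ τ)) : Contains p3142 τ := by
  obtain ⟨i, j, k, l, hij, hjk, hkl, hik, hli, hjl⟩ := h
  refine contains_iff_exists_strictMono.2 ⟨![i, j, k, l], by simp [*], ?_⟩
  rw [Fin.strictMono_iff_lt_succ]
  intro x
  fin_cases x <;> assumption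

end Containment

section King

variable {n : ℕ}

theorem val_add_one_eq_of_covBy {a b : Fin n} (h : a ⋖ b) : (a : ℕ) + 1 = b :=
  Nat.covBy_iff_add_one_eq.1 h.coe_fin

theorem fdist_eq_one_of_uIoo_eq_empty {a b : Fin n} (hab : a ≠ b) (h : uIoo a b = ∅) :
    fdist a b = 1 := by
  have hsucc : (a : ℕ) + 1 = b ∨ (b : ℕ) + 1 = a := by
    rcases hab.lt_or_gt with hlt | hgt
    · exact .inl (val_add_one_eq_of_covBy (covBy_iff_Ioo_eq.2 ⟨hlt, by rwa [uIoo_of_lt hlt] at h⟩))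
    · exact .inr (val_add_one_eq_of_covBy (covBy_iff_Ioo_eq.2 ⟨hgt, by rwa [uIoo_of_gt hgt] at h⟩))
  unfold fdist
  omega

theorem IsKing.contains_p2413_or_contains_p3142 {σ : Perm (Fin n)} (hσ : IsKing σ) (hn : 2 ≤ n) :
    Contains p2413 σ ∨ Contains p3142 σ := by
  by_contra! h
  have hends : (⟨0, by omega⟩ : Fin n) < ⟨n - 1, by omega⟩ := Fin.mk_lt_mk.2 (by omega)
  obtain ⟨i, -, j, -, hij, hbetween⟩ := exists_covBy_forall_notMem_uIoo σ.injective
    (mt contains_p2413_of_has2413 h.1) (mt contains_p3142_of_has2413_toDual h.2) hends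
  have hempty : uIoo (σ i) (σ j) = ∅ := eq_empty_of_forall_notMem fun x => by
    simpa using hbetween (σ.symm x) ⟨Nat.zero_le _, Nat.le_sub_one_of_lt (σ.symm x).isLt⟩
  exact hσ i j (val_add_one_eq_of_covBy hij).symm
    (fdist_eq_one_of_uIoo_eq_empty (σ.injective.ne hij.ne) hempty)

theorem isKing_of_length_one (ρ : Perm (Fin 1)) : IsKing ρ :=
  fun _ _ h => absurd h (by omega)

theorem isKing_p2413 : IsKing p2413 := by unfold IsKing; decide

theorem isKing_p3142 : IsKing p3142 := by unfold IsKing; decide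

end King

section Moebius

variable {m n : ℕ} {π : Perm (Fin n)}

open scoped Classical in
/-- The king permutations of length `l` strictly below `σ`, i.e. one level of the sum defining
`kingMu n σ`. -/
noncomputable def kingsBelow (σ : Perm (Fin n)) (l : ℕ) : Finset (Perm (Fin l)) :=
  {τ | IsKing τ ∧ StrictContains τ σ}

theorem mem_kingsBelow {l : ℕ} {τ : Perm (Fin l)} :
    τ ∈ kingsBelow π l ↔ IsKing τ ∧ Contains τ π ∧ l < n := by
  classical exact Finset.mem_filter_univ τ

theorem kingMu_eq_neg_sum_kingsBelow (hn : 2 ≤ n) :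
    kingMu n π = -∑ l ∈ Finset.Ico 1 n, ∑ τ ∈ kingsBelow π l, kingMu l τ := by
  obtain ⟨n, rfl⟩ := Nat.exists_eq_add_of_le' hn
  rw [kingMu]
  exact congr_arg Neg.neg (Finset.sum_attach _ fun l => ∑ τ ∈ kingsBelow π l, kingMu l τ)

theorem sum_kingMu_kingsBelow_one (hn : 2 ≤ n) : ∑ τ ∈ kingsBelow π 1, kingMu 1 τ = 1 := by
  have : kingsBelow π 1 = {1} := by
    ext τ
    simp only [Finset.mem_singleton, Subsingleton.elim τ 1, iff_true, mem_kingsBelow]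
    exact ⟨isKing_of_length_one 1, contains_of_length_one (by omega) 1, hn⟩
  rw [this, Finset.sum_singleton, kingMu]

/-- Every king permutation of length at least 2 contains one of the patterns `p` and `q`. This is
the only property of `[2413]` and `[3142]`, besides being kings, that the Möbius function needs. -/
def KingUnavoidable (p q : Perm (Fin m)) : Prop :=
  ∀ ⦃n : ℕ⦄ (σ : Perm (Fin n)), 2 ≤ n → IsKing σ → Contains p σ ∨ Contains q σ

namespace KingUnavoidable

variable {p q : Perm (Fin m)}

theorem symm (h : KingUnavoidable p q) : KingUnavoidable q p :=
  fun _ σ hn hσ => (h σ hn hσ).symm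

theorem length_le (h : KingUnavoidable p q) (hn : 2 ≤ n) (hπ : IsKing π) : m ≤ n :=
  (h π hn hπ).elim Contains.length_le Contains.length_le

theorem kingsBelow_eq_empty (h : KingUnavoidable p q) {l : ℕ} (hl : 2 ≤ l) (hlm : l < m) :
    kingsBelow π l = ∅ :=
  Finset.eq_empty_of_forall_notMem fun _ hτ =>
    (h.length_le hl (mem_kingsBelow.1 hτ).1).not_gt hlm

theorem kingMu_eq_neg_one (h : KingUnavoidable p q) (hm : 2 ≤ m) (σ : Perm (Fin m)) :
    kingMu m σ = -1 := by
  rw [kingMu_eq_neg_sum_kingsBelow hm, Finset.sum_eq_single_of_mem 1 (Finset.left_mem_Ico.2 hm),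
    sum_kingMu_kingsBelow_one hm]
  intro l hl hl1
  rw [Finset.mem_Ico] at hl
  rw [h.kingsBelow_eq_empty (by omega) hl.2, Finset.sum_empty]

theorem kingsBelow_eq_singleton (h : KingUnavoidable p q) (hm : 2 ≤ m) (hp : IsKing p)
    (hmn : m < n) (hπ : IsKing π) (hq : ¬ Contains q π) : kingsBelow π m = {p} := by
  ext τ
  rw [mem_kingsBelow, Finset.mem_singleton]
  constructor
  · rintro ⟨hτ, hτπ, -⟩
    have hpτ : Contains p τ := (h τ hm hτ).resolve_right fun hqτ => hq (hqτ.trans hτπ)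
    exact hpτ.eq.symm
  · rintro rfl
    exact ⟨hp, (h π (by omega) hπ).resolve_right hq, hmn⟩

theorem kingMu_eq_zero (h : KingUnavoidable p q) (hm : 2 ≤ m) (hp : IsKing p) (hmn : m < n)
    (hπ : IsKing π) (hq : ¬ Contains q π) : kingMu n π = 0 := by
  induction n using Nat.strong_induction_on with
  | _ n ih =>
  have hlevel : ∀ l ∈ Finset.Ico 1 n, l ≠ 1 ∧ l ≠ m → ∑ τ ∈ kingsBelow π l, kingMu l τ = 0 := by
    rintro l hl ⟨hl1, hlm⟩
    rw [Finset.mem_Ico] at hl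
    rcases hlm.lt_or_gt with hlt | hgt
    · rw [h.kingsBelow_eq_empty (by omega) hlt, Finset.sum_empty]
    · refine Finset.sum_eq_zero fun τ hτ => ?_
      obtain ⟨hτ, hτπ, hln⟩ := mem_kingsBelow.1 hτ
      exact ih l hln hgt hτ fun hqτ => hq (hqτ.trans hτπ)
  rw [kingMu_eq_neg_sum_kingsBelow (by omega),
    Finset.sum_eq_add_of_mem 1 m (Finset.left_mem_Ico.2 (by omega))
      (Finset.mem_Ico.2 ⟨by omega, hmn⟩) (by omega) hlevel,
    sum_kingMu_kingsBelow_one (by omega), h.kingsBelow_eq_singleton hm hp hmn hπ hq,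
    Finset.sum_singleton, h.kingMu_eq_neg_one hm, add_neg_cancel, neg_zero]

end KingUnavoidable

theorem kingUnavoidable_p2413_p3142 : KingUnavoidable p2413 p3142 :=
  fun _ _ hn hσ => hσ.contains_p2413_or_contains_p3142 hn

end Moebius

/-- if a king of length `n > 4` does not contain [2413] or does not
contain [3142], then its Möbius function value is `0`. -/
theorem mu_eq_zero_of_avoids (n : ℕ) (hn : 4 < n) (π : Equiv.Perm (Fin n)) (hπ : IsKing π)
    (h : ¬ Contains p2413 π ∨ ¬ Contains p3142 π) :
    kingMu n π = 0 := by
  rcases h with h | h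
  · exact kingUnavoidable_p2413_p3142.symm.kingMu_eq_zero (by omega) isKing_p3142 hn hπ h
  · exact kingUnavoidable_p2413_p3142.kingMu_eq_zero (by omega) isKing_p2413 hn hπ h
end
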